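/- Let V be a vertex operator algebra such that L(0) acts semisimply on every weak V-module. Then for any ordinary V-module W, D(W) = W′. -/

import Mathlib

noncomputable section

/-- The generalized binomial coefficient `C(m, i)` for `m ∈ ℤ`, `i ∈ ℕ`,
as a complex number: `m(m-1)⋯(m-i+1)/i!`. -/
def cchoose (m : ℤ) (i : ℕ) : ℂ :=
  (∏ j ∈ Finset.range i, ((m : ℂ) - (j : ℂ))) / (Nat.factorial i : ℂ)

/-- A vertex operator algebra `V = ⊕ₙ V₍ₙ₎` over `ℂ`.  The vertex operator map is
recorded through its modes `op u n v = uₙ v` (so `Y(u,x)v = Σₙ uₙv x^{-n-1}`), with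
vacuum `one`, conformal vector `omega` (with `L(k) = ω_{k+1}`), central charge `cc`,
weight grading `wtSpace` with projections `proj`.  The Jacobi identity is recorded in
the equivalent form of the Borcherds identity on modes. -/
structure VOA where
  carrier : Type
  [grp : AddCommGroup carrier]
  [mdl : Module ℂ carrier]
  op : carrier → ℤ → carrier → carrier
  one : carrier
  omega : carrier
  wtSpace : ℤ → Submodule ℂ carrier
  proj : ℤ → carrier → carrier
  cc : ℂ
  op_linear_left : ∀ (n : ℤ) (w : carrier), IsLinearMap ℂ fun u => op u n w
  op_linear_right : ∀ (u : carrier) (n : ℤ), IsLinearMap ℂ (op u n)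
  trunc : ∀ u v : carrier, ∃ N : ℤ, ∀ n : ℤ, N ≤ n → op u n v = 0
  one_op : ∀ (n : ℤ) (v : carrier), op one n v = if n = -1 then v else 0
  create_nonneg : ∀ (v : carrier) (n : ℤ), 0 ≤ n → op v n one = 0
  create : ∀ v : carrier, op v (-1) one = v
  borcherds : ∀ (u v w : carrier) (l m n : ℤ),
    (∑ᶠ i : ℕ, cchoose m i • op (op u (l + (i : ℤ)) v) (m + n - (i : ℤ)) w)
      = ∑ᶠ i : ℕ, ((-1 : ℂ) ^ i * cchoose l i) •
          (op u (l + m - (i : ℤ)) (op v (n + (i : ℤ)) w)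
            - ((-1 : ℂ) ^ l) • op v (l + n - (i : ℤ)) (op u (m + (i : ℤ)) w))
  proj_linear : ∀ n : ℤ, IsLinearMap ℂ (proj n)
  proj_mem : ∀ (n : ℤ) (v : carrier), proj n v ∈ wtSpace n
  proj_eq : ∀ n : ℤ, ∀ v ∈ wtSpace n, proj n v = v
  proj_ne : ∀ m n : ℤ, m ≠ n → ∀ v ∈ wtSpace m, proj n v = 0
  proj_finite : ∀ v : carrier, (Function.support fun n => proj n v).Finite
  proj_sum : ∀ v : carrier, (∑ᶠ n : ℤ, proj n v) = v
  fd : ∀ n : ℤ, FiniteDimensional ℂ (wtSpace n)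
  lower_trunc : ∃ N : ℤ, ∀ n : ℤ, n < N → wtSpace n = ⊥
  one_wt : one ∈ wtSpace 0
  omega_wt : omega ∈ wtSpace 2
  op_wt : ∀ k m n : ℤ, ∀ u ∈ wtSpace k, ∀ v ∈ wtSpace m, op u n v ∈ wtSpace (k + m - n - 1)
  L_zero : ∀ n : ℤ, ∀ v ∈ wtSpace n, op omega 1 v = (n : ℂ) • v
  L_neg_one : ∀ (u : carrier) (n : ℤ) (w : carrier),
    op (op omega 0 u) n w = (-(n : ℂ)) • op u (n - 1) w
  virasoro : ∀ (m n : ℤ) (v : carrier),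
    op omega (m + 1) (op omega (n + 1) v) - op omega (n + 1) (op omega (m + 1) v)
      = ((m : ℂ) - (n : ℂ)) • op omega (m + n + 1) v
        + (if m + n = 0 then (((m : ℂ) ^ 3 - (m : ℂ)) / 12) * cc else 0) • v

attribute [instance] VOA.grp VOA.mdl

namespace VOA

variable (V : VOA)

/-- The Virasoro operator `L(k) = ω_{k+1}`. -/
def L (k : ℤ) (v : V.carrier) : V.carrier := V.op V.omega (k + 1) v

/-- The positive-weight part `V₊ = ⊕_{n ≥ 1} V₍ₙ₎`. -/
def pos : Submodule ℂ V.carrier := ⨆ (n : ℤ) (_ : 1 ≤ n), V.wtSpace n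

/-- Zhu's subspace `C₂(V) = span{u₋₂v : u, v ∈ V}`. -/
def C2 : Submodule ℂ V.carrier :=
  Submodule.span ℂ {x : V.carrier | ∃ u v : V.carrier, x = V.op u (-2) v}

/-- The subspace `C₁(V) = span(v₋₁V₊ (v ∈ V₊) together with L(-1)V)`. -/
def C1 : Submodule ℂ V.carrier :=
  Submodule.span ℂ
    ({x : V.carrier | ∃ u ∈ V.pos, ∃ v ∈ V.pos, x = V.op u (-1) v}
      ∪ {x : V.carrier | ∃ v : V.carrier, x = V.op V.omega 0 v})

/-- Iterated application of modes: `iterApply [(u¹,n₁),…,(uʳ,n_r)] w = u¹_{n₁} ⋯ uʳ_{n_r} w`. -/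
def iterApply : List (V.carrier × ℤ) → V.carrier → V.carrier
  | [], w => w
  | p :: l, w => V.op p.1 p.2 (iterApply l w)

/-- `U ⊆ V` generates `V` as a vertex operator algebra:  `V` is linearly spanned by
the elements `u¹_{n₁} ⋯ uʳ_{n_r} 1` with `uⁱ ∈ U`, `n_i ∈ ℤ`. -/
def generates (U : Set V.carrier) : Prop :=
  Submodule.span ℂ {x : V.carrier | ∃ l : List (V.carrier × ℤ),
    (∀ p ∈ l, p.1 ∈ U) ∧ x = V.iterApply l V.one} = ⊤

/-- `V` is finitely generated as a vertex operator algebra. -/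
def FinitelyGenerated : Prop := ∃ S : Finset V.carrier, V.generates ↑S

end VOA

/-- A weak `V`-module: all axioms of a module (truncation, vacuum, Jacobi identity in
Borcherds form) except those involving gradings. -/
structure WeakModule (V : VOA) where
  carrier : Type
  [grp : AddCommGroup carrier]
  [mdl : Module ℂ carrier]
  op : V.carrier → ℤ → carrier → carrier
  op_linear_left : ∀ (n : ℤ) (w : carrier), IsLinearMap ℂ fun u => op u n w
  op_linear_right : ∀ (u : V.carrier) (n : ℤ), IsLinearMap ℂ (op u n)
  trunc : ∀ (u : V.carrier) (w : carrier), ∃ N : ℤ, ∀ n : ℤ, N ≤ n → op u n w = 0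
  one_op : ∀ (n : ℤ) (w : carrier), op V.one n w = if n = -1 then w else 0
  borcherds : ∀ (u v : V.carrier) (w : carrier) (l m n : ℤ),
    (∑ᶠ i : ℕ, cchoose m i • op (V.op u (l + (i : ℤ)) v) (m + n - (i : ℤ)) w)
      = ∑ᶠ i : ℕ, ((-1 : ℂ) ^ i * cchoose l i) •
          (op u (l + m - (i : ℤ)) (op v (n + (i : ℤ)) w)
            - ((-1 : ℂ) ^ l) • op v (l + n - (i : ℤ)) (op u (m + (i : ℤ)) w))

attribute [instance] WeakModule.grp WeakModule.mdl

namespace WeakModule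

variable {V : VOA} (W : WeakModule V)

/-- `L(0)` acting on a weak module, as a linear map. -/
def L0 : W.carrier →ₗ[ℂ] W.carrier := IsLinearMap.mk' _ (W.op_linear_right V.omega 1)

/-- The `L(0)`-eigenspace of eigenvalue `h`. -/
def eig (h : ℂ) : Submodule ℂ W.carrier :=
  LinearMap.ker (W.L0 - h • (LinearMap.id : W.carrier →ₗ[ℂ] W.carrier))

/-- The coefficient `v*ₙ` of the adjoint vertex operator
`⟨Y*(v,x)α, w⟩ = ⟨α, Y(e^{xL(1)}(-x^{-2})^{L(0)}v, x^{-1})w⟩` acting on the full dual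
space: for `v` homogeneous of weight `h`,
`(v*ₙ α)(w) = (-1)^h Σ_{i≥0} (1/i!) α((L(1)^i v)_{2h-n-i-2} w)`, extended to general
`v` via the weight-space projections. -/
def dmode (v : V.carrier) (n : ℤ) (α : W.carrier → ℂ) (w : W.carrier) : ℂ :=
  ∑ᶠ h : ℤ, ∑ᶠ i : ℕ,
    ((-1 : ℂ) ^ h / (Nat.factorial i : ℂ)) *
      α (W.op ((V.L 1)^[i] (V.proj h v)) (2 * h - n - (i : ℤ) - 2) w)

/-- `D(W) ⊆ W*`: the linear functionals `α` on `W` such that for every `v ∈ V`,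
`Y*(v,x)α ∈ W*((x))`, i.e. `v*ₙ α = 0` for `n` sufficiently large. -/
def DW : Set (W.carrier → ℂ) :=
  {α | IsLinearMap ℂ α ∧
    ∀ v : V.carrier, ∃ N : ℤ, ∀ n : ℤ, N ≤ n → ∀ w : W.carrier, W.dmode v n α w = 0}

/-- A subspace stable under all modes of all vertex operators, i.e. a `V`-submodule. -/
def IsStable (S : Submodule ℂ W.carrier) : Prop :=
  ∀ (v : V.carrier) (n : ℤ), ∀ m ∈ S, W.op v n m ∈ S

/-- An irreducible (nonzero, no proper nonzero stable subspaces) `V`-submodule. -/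
def IsIrreducibleSub (S : Submodule ℂ W.carrier) : Prop :=
  S ≠ ⊥ ∧ W.IsStable S ∧
    ∀ T : Submodule ℂ W.carrier, W.IsStable T → T ≤ S → T = ⊥ ∨ T = S

/-- A stable subspace which is an ordinary module: `L(0)` acts semisimply on it with
finite-dimensional eigenspaces, and for each `h` the eigenvalues `h + m` do not occur
for `m` a sufficiently negative integer. -/
def IsOrdinarySub (S : Submodule ℂ W.carrier) : Prop :=
  S ≤ (⨆ h : ℂ, W.eig h ⊓ S) ∧ (∀ h : ℂ, FiniteDimensional ℂ ↥(W.eig h ⊓ S)) ∧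
    ∀ h : ℂ, ∃ N : ℤ, ∀ m : ℤ, m ≤ N → W.eig (h + (m : ℂ)) ⊓ S = ⊥

/-- The weak module `W` is irreducible. -/
def IsIrreducible : Prop :=
  (⊥ : Submodule ℂ W.carrier) ≠ ⊤ ∧
    ∀ S : Submodule ℂ W.carrier, W.IsStable S → S = ⊥ ∨ S = ⊤

/-- `Cₙ(W) = span{v₋ₙw : v ∈ V, w ∈ W}`. -/
def Cn (n : ℤ) : Submodule ℂ W.carrier :=
  Submodule.span ℂ {x : W.carrier | ∃ (v : V.carrier) (w : W.carrier), x = W.op v (-n) w}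

/-- `B(W) = span(u₋₁W (u ∈ V₊) together with v₀W (v homogeneous, wt v ≥ 2))`. -/
def BW : Submodule ℂ W.carrier :=
  Submodule.span ℂ
    ({x : W.carrier | ∃ v ∈ V.pos, ∃ w : W.carrier, x = W.op v (-1) w}
      ∪ {x : W.carrier | ∃ k : ℤ, 2 ≤ k ∧ ∃ v ∈ V.wtSpace k, ∃ w : W.carrier, x = W.op v 0 w})

/-- Zhu's subspace `O(W) = span{Σ_{i≥0} C(wt v, i) v_{i-2} w}` so that `A(W) = W/O(W)`. -/
def OW : Submodule ℂ W.carrier :=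
  Submodule.span ℂ
    {x : W.carrier | ∃ (k : ℤ) (v : V.carrier), v ∈ V.wtSpace k ∧
      ∃ w : W.carrier, x = ∑ᶠ i : ℕ, cchoose k i • W.op v ((i : ℤ) - 2) w}

/-- A subspace `T ⊇ O(W)` of `W` is closed under the Frenkel–Zhu left and right
`A(V)`-actions `v * w = Σᵢ C(wt v, i) v_{i-1} w` and `w * v = Σᵢ C(wt v - 1, i) v_{i-1} w`;
for `T ⊇ O(W)` this expresses that `T/O(W)` is an `A(V)`-sub-bimodule of `A(W)`. -/
def BimoduleClosed (T : Submodule ℂ W.carrier) : Prop :=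
  ∀ k : ℤ, ∀ v ∈ V.wtSpace k, ∀ w ∈ T,
    (∑ᶠ i : ℕ, cchoose k i • W.op v ((i : ℤ) - 1) w) ∈ T ∧
    (∑ᶠ i : ℕ, cchoose (k - 1) i • W.op v ((i : ℤ) - 1) w) ∈ T

/-- Equivalence (isomorphism) of weak modules. -/
def Equiv (M N : WeakModule V) : Prop :=
  ∃ e : M.carrier ≃ₗ[ℂ] N.carrier,
    ∀ (v : V.carrier) (n : ℤ) (w : M.carrier), e (M.op v n w) = N.op v n (e w)

end WeakModule

/-- `V` is of class 𝒜: `L(0)` acts semisimply on every weak `V`-module. -/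
def VOA.classA (V : VOA) : Prop :=
  ∀ M : WeakModule V, (⨆ h : ℂ, M.eig h) = ⊤

/-- `V` is regular: every weak `V`-module is a direct sum of irreducible ordinary
`V`-modules. -/
def VOA.regular (V : VOA) : Prop :=
  ∀ M : WeakModule V, ∃ (ι : Type) (S : ι → Submodule ℂ M.carrier),
    (∀ i, M.IsIrreducibleSub (S i) ∧ M.IsOrdinarySub (S i)) ∧
    (∀ i, Disjoint (S i) (⨆ (j : ι) (_ : j ≠ i), S j)) ∧ (⨆ i, S i) = ⊤

/-- A generalized `V`-module: a weak module with a semisimple `L(0)`-action, graded by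
the `L(0)`-eigenvalues, with weight-space projections `projW`. -/
structure GenModule (V : VOA) extends WeakModule V where
  wt : ℂ → Submodule ℂ carrier
  projW : ℂ → carrier → carrier
  projW_linear : ∀ h : ℂ, IsLinearMap ℂ (projW h)
  projW_mem : ∀ (h : ℂ) (w : carrier), projW h w ∈ wt h
  projW_eq : ∀ h : ℂ, ∀ w ∈ wt h, projW h w = w
  projW_ne : ∀ g h : ℂ, g ≠ h → ∀ w ∈ wt g, projW h w = 0
  projW_finite : ∀ w : carrier, (Function.support fun h => projW h w).Finite
  projW_sum : ∀ w : carrier, (∑ᶠ h : ℂ, projW h w) = w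
  wt_L0 : ∀ h : ℂ, ∀ w ∈ wt h, op V.omega 1 w = h • w
  wt_op : ∀ k : ℤ, ∀ v ∈ V.wtSpace k, ∀ (h : ℂ) (n : ℤ), ∀ w ∈ wt h,
    op v n w ∈ wt (h + (k : ℂ) - (n : ℂ) - 1)

/-- An ordinary `V`-module: a generalized module whose weight spaces are
finite-dimensional and whose weights are truncated from below in each coset `h + ℤ`. -/
structure OrdModule (V : VOA) extends GenModule V where
  wt_fd : ∀ h : ℂ, FiniteDimensional ℂ ↥(wt h)
  wt_lower : ∀ h : ℂ, ∃ N : ℤ, ∀ m : ℤ, m ≤ N → wt (h + (m : ℂ)) = ⊥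

namespace GenModule

variable {V : VOA} (W : GenModule V)

/-- `W₊ = ⊕_{Re h > 0} W₍ₕ₎`. -/
def posW : Submodule ℂ W.carrier := ⨆ (h : ℂ) (_ : 0 < h.re), W.wt h

/-- `C₁(W) = span(v₋₁W₊ (v ∈ V₊) together with L(-1)W)`. -/
def C1W : Submodule ℂ W.carrier :=
  Submodule.span ℂ
    ({x : W.carrier | ∃ v ∈ V.pos, ∃ w ∈ W.posW, x = W.op v (-1) w}
      ∪ {x : W.carrier | ∃ w : W.carrier, x = W.op V.omega 0 w})

/-- The restricted dual `W' = ⊕ₕ W₍ₕ₎* ⊆ W*`: the linear functionals vanishing on all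
but finitely many weight spaces. -/
def restrictedDual : Set (W.carrier → ℂ) :=
  {α | IsLinearMap ℂ α ∧ {h : ℂ | ∃ w ∈ W.wt h, α w ≠ 0}.Finite}

end GenModule

/-- `D(W)⁰`: the sum of the `L(0)`-eigenspaces of the weak module `D(W) ⊆ W*`, where
`L*(0) = ω*₁` acts on `α ∈ W*` by `(L*(0)α)(w) = α(L(0)w)`. -/
def OrdModule.DW0 {V : VOA} (W : OrdModule V) : Set (W.carrier → ℂ) :=
  {α | ∃ (S : Finset ℂ) (f : ℂ → (W.carrier → ℂ)),
    (∀ h ∈ S, f h ∈ W.toWeakModule.DW ∧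
      ∀ w : W.carrier, f h (W.op V.omega 1 w) = h * f h w) ∧
    α = ∑ h ∈ S, f h}

/-- An ℕ-gradable weak `V`-module: a weak module with an ℕ-grading
`W = ⊕_{n∈ℕ} W(n)` with `v_m W(n) ⊆ W(wt v + n - m - 1)` (graded pieces of negative
index are zero). -/
structure NGradedModule (V : VOA) extends WeakModule V where
  gr : ℤ → Submodule ℂ carrier
  gr_neg : ∀ n : ℤ, n < 0 → gr n = ⊥
  gr_sup : (⨆ n : ℤ, gr n) = ⊤
  gr_indep : ∀ n : ℤ, Disjoint (gr n) (⨆ (m : ℤ) (_ : m ≠ n), gr m)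
  gr_op : ∀ k : ℤ, ∀ v ∈ V.wtSpace k, ∀ m n : ℤ, ∀ w ∈ gr n,
    op v m w ∈ gr (k + n - m - 1)

/-- An intertwining operator of type `(W₃; W₁ W₂)` in the sense of
Frenkel–Huang–Lepowsky, recorded through its complex-indexed modes
`I w₁ h w₂ = (w₁)ₕ w₂` (so `Y(w₁,x)w₂ = Σ_{h∈ℂ} (w₁)ₕ w₂ x^{-h-1}`):
linearity, truncation, the `L(-1)`-derivative property, and the Jacobi identity in
component (Borcherds) form. -/
def IsIntertwiner {V : VOA} (W1 W2 W3 : OrdModule V)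
    (I : W1.carrier → ℂ → W2.carrier → W3.carrier) : Prop :=
  (∀ (h : ℂ) (w2 : W2.carrier), IsLinearMap ℂ fun w1 => I w1 h w2) ∧
  (∀ (w1 : W1.carrier) (h : ℂ), IsLinearMap ℂ (I w1 h)) ∧
  (∀ (w1 : W1.carrier) (w2 : W2.carrier) (h : ℂ),
    ∃ N : ℤ, ∀ n : ℤ, N ≤ n → I w1 (h + (n : ℂ)) w2 = 0) ∧
  (∀ (w1 : W1.carrier) (h : ℂ) (w2 : W2.carrier),
    I (W1.op V.omega 0 w1) h w2 = (-h) • I w1 (h - 1) w2) ∧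
  (∀ (u : V.carrier) (w1 : W1.carrier) (w2 : W2.carrier) (l m : ℤ) (h : ℂ),
    (∑ᶠ i : ℕ, cchoose m i • I (W1.op u (l + (i : ℤ)) w1) ((m : ℂ) + h - (i : ℂ)) w2)
      = ∑ᶠ i : ℕ, ((-1 : ℂ) ^ i * cchoose l i) •
          (W3.op u (l + m - (i : ℤ)) (I w1 (h + (i : ℂ)) w2)
            - ((-1 : ℂ) ^ l) • I w1 ((l : ℂ) + h - (i : ℂ)) (W2.op u (m + (i : ℤ)) w2)))

/-- The fusion rule `dim I(W₃; W₁W₂)` is finite: the space of intertwining operators of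
the indicated type is finite-dimensional. -/
def FusionFinite {V : VOA} (W1 W2 W3 : OrdModule V) : Prop :=
  FiniteDimensional ℂ
    ↥(Submodule.span ℂ {I : W1.carrier → ℂ → W2.carrier → W3.carrier |
        IsIntertwiner W1 W2 W3 I})

end

/-!
Conjugating by `e^{xL(1)}`, the adjoint operators `Y*(v, x)` inherit the Borcherds identity from
`W`, so that `D(W)` is itself a weak `V`-module. Its `L(0)` is the transpose of the `L(0)` of `W`,
hence an `L(0)`-eigenvector in `D(W)` vanishes on all weight spaces of `W` but one; if `L(0)` is
semisimple on `D(W)`, every element of `D(W)` lies in `W'`. Conversely `v*ₙ α` only sees `α` on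
weights raised by `n + 1 - wt v`, so if `α` is supported on finitely many weights the lower
truncation of the weights of `W` forces `v*ₙ α = 0` for large `n`.
-/

open Finset.HasAntidiagonal (antidiagonal mem_antidiagonal)

theorem cchoose_eq_choose (m : ℤ) (i : ℕ) : cchoose m i = Ring.choose (m : ℂ) i := by
  rw [Ring.choose_eq_smul, ← Polynomial.aeval_eq_smeval, Polynomial.aeval_def,
    Polynomial.eval₂_eq_eval_map, descPochhammer_map, descPochhammer_eval_eq_prod_range, cchoose,
    smul_eq_mul, div_eq_inv_mul]

theorem cchoose_zero_right (m : ℤ) : cchoose m 0 = 1 := by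
  simp [cchoose]

theorem cchoose_natCast (n i : ℕ) : cchoose n i = n.choose i := by
  rw [cchoose_eq_choose, Int.cast_natCast, Ring.choose_natCast]

theorem cchoose_zero_succ (i : ℕ) : cchoose 0 (i + 1) = 0 := by
  simpa using cchoose_natCast 0 (i + 1)

theorem cchoose_succ_succ (m : ℤ) (i : ℕ) :
    cchoose (m + 1) (i + 1) = cchoose m i + cchoose m (i + 1) := by
  simp only [cchoose_eq_choose, Int.cast_add, Int.cast_one, Ring.choose_succ_succ]

theorem add_one_sub_mul_cchoose (m : ℤ) (i : ℕ) :
    ((m : ℂ) + 1 - i) * cchoose (m + 1) i = (m + 1) * cchoose m i := by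
  have h := Finset.prod_range_succ (fun j : ℕ => (m : ℂ) + 1 - j) i
  rw [Finset.prod_range_succ'] at h
  simp only [Nat.cast_add, Nat.cast_one, add_sub_add_right_eq_sub, Nat.cast_zero, sub_zero] at h
  simp only [cchoose, Int.cast_add, Int.cast_one, mul_div_assoc']
  rw [mul_comm _ (∏ j ∈ _, _), ← h, mul_comm]

theorem add_mul_cchoose (m : ℤ) (i q : ℕ) :
    ((i : ℂ) + q) * cchoose m i
      = ((m : ℂ) - q - i + 1) * (cchoose (m + 1) i - cchoose m i) + q * cchoose (m + 1) i := by
  linear_combination -add_one_sub_mul_cchoose m i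

theorem cchoose_neg (m : ℤ) (i : ℕ) : cchoose (-m) i = (-1) ^ i * cchoose (m + i - 1) i := by
  simp only [cchoose_eq_choose]
  push_cast
  rw [Ring.choose_neg]
  simp [Int.negOnePow, Units.smul_def]

theorem cchoose_add (m n : ℤ) (i : ℕ) :
    cchoose (m + n) i = ∑ p ∈ antidiagonal i, cchoose m p.1 * cchoose n p.2 := by
  simp only [cchoose_eq_choose, Int.cast_add, Ring.add_choose_eq i (Commute.all (m : ℂ) n)]

theorem sum_antidiagonal_cchoose_mul_cchoose_sub (m n : ℤ) (i : ℕ) :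
    ∑ p ∈ antidiagonal i, (-1) ^ p.1 * cchoose m p.1 * cchoose (n - p.1) p.2
      = cchoose (n - m) i := by
  rw [← neg_sub, cchoose_neg, show m - n + i - 1 = m + (i - 1 - n) by ring, cchoose_add,
    Finset.mul_sum]
  refine Finset.sum_congr rfl fun ⟨a, j⟩ hp => ?_
  obtain rfl := mem_antidiagonal.mp hp
  rw [← neg_sub (a : ℤ) n, cchoose_neg, pow_add]
  push_cast
  rw [show (a : ℤ) - n + j - 1 = a + j - 1 - n by ring]
  ring

section Sums

variable {M : Type*} [AddCommMonoid M]

theorem sum_antidiagonal_antidiagonal (f : ℕ → ℕ → ℕ → M) (s : ℕ) :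
    ∑ x ∈ antidiagonal s, ∑ p ∈ antidiagonal x.1, f p.1 p.2 x.2
      = ∑ x ∈ antidiagonal s, ∑ p ∈ antidiagonal x.2, f x.1 p.1 p.2 := by
  rw [Finset.sum_sigma', Finset.sum_sigma']
  refine Finset.sum_nbij' (fun ⟨x, p⟩ => ⟨(p.1, p.2 + x.2), (p.2, x.2)⟩)
    (fun ⟨x, p⟩ => ⟨(x.1 + p.1, p.2), (x.1, p.1)⟩) ?_ ?_ ?_ ?_ ?_ <;>
  rintro ⟨⟨x, y⟩, ⟨a, b⟩⟩ h <;>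
  simp only [Finset.mem_sigma, mem_antidiagonal] at h ⊢ <;>
  grind

theorem sum_range_sum_antidiagonal (f : ℕ → ℕ → M) {N : ℕ} (hf : ∀ a b, N ≤ a + b → f a b = 0) :
    ∑ s ∈ Finset.range N, ∑ p ∈ antidiagonal s, f p.1 p.2
      = ∑ a ∈ Finset.range N, ∑ b ∈ Finset.range N, f a b := by
  simp only [Finset.Nat.sum_antidiagonal_eq_sum_range_succ f, Finset.sum_range_diag_flip]
  refine Finset.sum_congr rfl fun a _ => Finset.sum_subset (by simp) fun b _ hb => hf a b ?_
  simp only [Finset.mem_range] at hb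
  lia

theorem sum_range_sum_antidiagonal_antidiagonal (f : ℕ → ℕ → ℕ → M) {N : ℕ}
    (hf : ∀ a b c, N ≤ a + b + c → f a b c = 0) :
    ∑ s ∈ Finset.range N, ∑ x ∈ antidiagonal s, ∑ p ∈ antidiagonal x.1, f p.1 p.2 x.2
      = ∑ a ∈ Finset.range N, ∑ b ∈ Finset.range N, ∑ c ∈ Finset.range N, f a b c := by
  simp only [sum_antidiagonal_antidiagonal]
  rw [sum_range_sum_antidiagonal fun a r => ∑ p ∈ antidiagonal r, f a p.1 p.2]
  · exact Finset.sum_congr rfl fun a _ =>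
      sum_range_sum_antidiagonal (f a) fun b c h => hf a b c (by lia)
  · intro a r har
    refine Finset.sum_eq_zero fun p hp => hf _ _ _ ?_
    rwa [add_assoc, mem_antidiagonal.mp hp]

theorem sum_range_rotate (f : ℕ → ℕ → ℕ → M) (N : ℕ) :
    ∑ a ∈ Finset.range N, ∑ b ∈ Finset.range N, ∑ c ∈ Finset.range N, f a b c
      = ∑ b ∈ Finset.range N, ∑ c ∈ Finset.range N, ∑ a ∈ Finset.range N, f a b c := by
  rw [Finset.sum_comm]
  exact Finset.sum_congr rfl fun b _ => Finset.sum_comm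

theorem finsum_eq_sum_range {f : ℕ → M} {N : ℕ} (hf : ∀ i, N ≤ i → f i = 0) :
    ∑ᶠ i, f i = ∑ i ∈ Finset.range N, f i := by
  refine finsum_eq_sum_of_support_subset f fun i hi => ?_
  simpa using not_le.mp fun h => hi (hf i h)

theorem finite_support_of_eventually_eq_zero {f : ℕ → M} (hf : ∀ᶠ i in Filter.atTop, f i = 0) :
    (Function.support f).Finite := by
  rwa [← Nat.cofinite_eq_atTop, Filter.eventually_cofinite] at hf

theorem finsum_eq_finsum_iff_eventually {f g : ℕ → M} (hf : ∀ᶠ i in Filter.atTop, f i = 0)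
    (hg : ∀ᶠ i in Filter.atTop, g i = 0) :
    ∑ᶠ i, f i = ∑ᶠ i, g i ↔
      ∀ᶠ N in Filter.atTop, ∑ i ∈ Finset.range N, f i = ∑ i ∈ Finset.range N, g i := by
  have key : ∀ᶠ N in Filter.atTop,
      ∑ᶠ i, f i = ∑ i ∈ Finset.range N, f i ∧ ∑ᶠ i, g i = ∑ i ∈ Finset.range N, g i := by
    filter_upwards [Filter.eventually_forall_ge_atTop.mpr hf,
      Filter.eventually_forall_ge_atTop.mpr hg] with N hN hN'
    exact ⟨finsum_eq_sum_range hN, finsum_eq_sum_range hN'⟩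
  constructor
  · intro h
    filter_upwards [key] with N hN
    rw [← hN.1, ← hN.2, h]
  · intro h
    obtain ⟨N, hN, hN'⟩ := (key.and h).exists
    rw [hN.1, hN.2, hN']

end Sums

section LocallyFiniteSum

variable {ι R M N P : Type*} [Semiring R] [AddCommMonoid M] [Module R M] [AddCommMonoid N]
  [Module R N] [AddCommMonoid P] [Module R P]

/-- The pointwise sum of a locally finite family of linear maps. -/
noncomputable def locallyFiniteSum (f : ι → M →ₗ[R] N)
    (hf : ∀ x, (Function.support fun i => f i x).Finite) : M →ₗ[R] N where
  toFun x := ∑ᶠ i, f i x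
  map_add' x y := by
    simp only [map_add]
    exact finsum_add_distrib (hf x) (hf y)
  map_smul' c x := by
    simp only [map_smul, RingHom.id_apply, smul_finsum' c (hf x)]

theorem locallyFiniteSum_apply (f : ι → M →ₗ[R] N)
    (hf : ∀ x, (Function.support fun i => f i x).Finite) (x : M) :
    locallyFiniteSum f hf x = ∑ᶠ i, f i x := rfl

theorem map_locallyFiniteSum (φ : N →ₗ[R] P) (f : ι → M →ₗ[R] N)
    (hf : ∀ x, (Function.support fun i => f i x).Finite) (x : M) :
    φ (locallyFiniteSum f hf x) = ∑ᶠ i, φ (f i x) :=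
  map_finsum φ (hf x)

end LocallyFiniteSum

section DivPow

variable (K : Type*) {A : Type*} [Field K] [Semiring A] [Algebra K A]

/-- The divided power `xⁿ / n!`, the coefficient of `tⁿ` in `eᵗˣ`. -/
noncomputable def divPow (x : A) (n : ℕ) : A := (n.factorial : K)⁻¹ • x ^ n

@[simp]
theorem divPow_zero (x : A) : divPow K x 0 = 1 := by
  simp [divPow]

variable {K} [CharZero K]

theorem mul_divPow (x : A) (n : ℕ) : x * divPow K x n = ((n : K) + 1) • divPow K x (n + 1) := by
  simp only [divPow, mul_smul_comm, ← pow_succ', smul_smul, Nat.factorial_succ, Nat.cast_mul,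
    mul_inv, Nat.cast_succ]
  rw [mul_inv_cancel_left₀ n.cast_add_one_ne_zero]

/-- With `a r` the coefficient of `tʳ` in a power series `a`, the hypothesis says
`[x, a] = da/dt` and the conclusion is the coefficient of `tˢ` in `eᵗˣ a(0) = a(t) eᵗˣ`. -/
theorem divPow_mul_eq_sum_antidiagonal {x : A} {a : ℕ → A}
    (h : ∀ r, x * a r = ((r : K) + 1) • a (r + 1) + a r * x) (s : ℕ) :
    divPow K x s * a 0 = ∑ p ∈ antidiagonal s, a p.1 * divPow K x p.2 := by
  induction s with
  | zero => simp
  | succ s ih =>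
    have split_weight : ((s : K) + 1) • ∑ p ∈ antidiagonal (s + 1), a p.1 * divPow K x p.2
        = ∑ p ∈ antidiagonal (s + 1), (p.1 : K) • (a p.1 * divPow K x p.2)
          + ∑ p ∈ antidiagonal (s + 1), (p.2 : K) • (a p.1 * divPow K x p.2) := by
      rw [Finset.smul_sum, ← Finset.sum_add_distrib]
      refine Finset.sum_congr rfl fun p hp => ?_
      rw [← add_smul, ← Nat.cast_add, mem_antidiagonal.mp hp, Nat.cast_succ]
    refine (IsUnit.mk0 _ (s.cast_add_one_ne_zero (R := K))).smul_left_cancel.mp ?_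
    calc ((s : K) + 1) • (divPow K x (s + 1) * a 0)
        = x * (divPow K x s * a 0) := by rw [← mul_assoc, mul_divPow, smul_mul_assoc]
      _ = ∑ p ∈ antidiagonal s, (((p.1 : K) + 1) • (a (p.1 + 1) * divPow K x p.2)
            + ((p.2 : K) + 1) • (a p.1 * divPow K x (p.2 + 1))) := by
          rw [ih, Finset.mul_sum]
          refine Finset.sum_congr rfl fun p _ => ?_
          rw [← mul_assoc, h, add_mul, smul_mul_assoc, mul_assoc, mul_divPow, mul_smul_comm]
      _ = ((s : K) + 1) • ∑ p ∈ antidiagonal (s + 1), a p.1 * divPow K x p.2 := by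
          rw [split_weight, Finset.Nat.sum_antidiagonal_succ, Finset.Nat.sum_antidiagonal_succ',
            Finset.sum_add_distrib]
          simp

end DivPow

namespace VOA

variable (V : VOA)

/-- The mode `u ↦ uₙ` of the vertex operator map, with values in the endomorphisms of `V`. -/
noncomputable def mode (n : ℤ) : V.carrier →ₗ[ℂ] Module.End ℂ V.carrier :=
  LinearMap.mk₂ ℂ (fun u v => V.op u n v)
    (fun u u' v => (V.op_linear_left n v).map_add u u')
    (fun c u v => (V.op_linear_left n v).map_smul c u)
    (fun u v v' => (V.op_linear_right u n).map_add v v')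
    (fun c u v => (V.op_linear_right u n).map_smul c v)

theorem mode_apply (n : ℤ) (u v : V.carrier) : V.mode n u v = V.op u n v := rfl

/-- The projection onto the weight space `V₍ₙ₎`, as a linear map. -/
noncomputable def projₗ (n : ℤ) : V.carrier →ₗ[ℂ] V.carrier := (V.proj_linear n).mk' _

theorem projₗ_apply (n : ℤ) (v : V.carrier) : V.projₗ n v = V.proj n v := rfl

/-- The Virasoro operator `L(1) = ω₂`, as a linear map. -/
noncomputable def L1 : Module.End ℂ V.carrier := V.mode 2 V.omega

variable {V}

@[elab_as_elim]
theorem induction_homogeneous {p : V.carrier → Prop} (v : V.carrier) (zero : p 0)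
    (add : ∀ u v, p u → p v → p (u + v)) (homogeneous : ∀ h, ∀ v ∈ V.wtSpace h, p v) : p v := by
  rw [← V.proj_sum v]
  exact finsum_induction p zero add fun h => homogeneous h _ (V.proj_mem h v)

theorem mode_mem_wtSpace {h k : ℤ} {u v : V.carrier} (hu : u ∈ V.wtSpace h)
    (hv : v ∈ V.wtSpace k) (n : ℤ) : V.mode n u v ∈ V.wtSpace (h + k - n - 1) :=
  V.op_wt h k n u hu v hv

theorem L1_mem_wtSpace {h : ℤ} {u : V.carrier} (hu : u ∈ V.wtSpace h) :
    V.L1 u ∈ V.wtSpace (h - 1) := by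
  have := mode_mem_wtSpace V.omega_wt hu 2
  rwa [show 2 + h - 2 - 1 = h - 1 by ring] at this

theorem divPow_L1_mem_wtSpace {h : ℤ} {u : V.carrier} (hu : u ∈ V.wtSpace h) (i : ℕ) :
    divPow ℂ V.L1 i u ∈ V.wtSpace (h - i) := by
  refine Submodule.smul_mem _ _ ?_
  induction i with
  | zero => simpa using hu
  | succ i ih =>
    have := L1_mem_wtSpace ih
    rwa [← Module.End.mul_apply, ← pow_succ', sub_sub, ← Nat.cast_succ] at this

variable (V) in
theorem exists_forall_mem_wtSpace_eq_zero :
    ∃ N : ℤ, ∀ n < N, ∀ v ∈ V.wtSpace n, v = 0 := by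
  obtain ⟨N, hN⟩ := V.lower_trunc
  refine ⟨N, fun n hn v hv => ?_⟩
  rwa [hN n hn, Submodule.mem_bot] at hv

theorem eventually_divPow_L1_eq_zero (v : V.carrier) :
    ∀ᶠ i in Filter.atTop, divPow ℂ V.L1 i v = 0 := by
  induction v using induction_homogeneous with
  | zero => simp
  | add u v hu hv =>
    filter_upwards [hu, hv] with i hu hv
    rw [map_add, hu, hv, add_zero]
  | homogeneous h v hv =>
    obtain ⟨N, hN⟩ := V.exists_forall_mem_wtSpace_eq_zero
    filter_upwards [Filter.eventually_gt_atTop (h - N).toNat] with i hi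
    exact hN _ (by lia) _ (divPow_L1_mem_wtSpace hv i)

theorem eventually_mode_eq_zero (u v : V.carrier) (l : ℤ) :
    ∀ᶠ i : ℕ in Filter.atTop, V.mode (l + i) u v = 0 := by
  obtain ⟨N, hN⟩ := V.trunc u v
  filter_upwards [Filter.eventually_ge_atTop (N - l).toNat] with i hi
  exact hN _ (by lia)

theorem L1_mul_mode {h : ℤ} {u : V.carrier} (hu : u ∈ V.wtSpace h) (n : ℤ) :
    V.L1 * V.mode n u
      = (2 * h - n - 2 : ℂ) • V.mode (n + 1) u + V.mode n (V.L1 u) + V.mode n u * V.L1 := by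
  ext v
  have borcherds := V.borcherds V.omega u v 0 2 n
  rw [finsum_eq_sum_range (N := 3), finsum_eq_sum_range (N := 1)] at borcherds
  rotate_left
  · intro i hi
    obtain ⟨i, rfl⟩ := Nat.exists_eq_add_of_le' hi
    rw [cchoose_zero_succ, mul_zero, zero_smul]
  · intro i hi
    rw [← Nat.cast_two, cchoose_natCast, Nat.choose_eq_zero_of_lt hi, Nat.cast_zero, zero_smul]
  have hchoose (i : ℕ) : cchoose 2 i = Nat.choose 2 i := cchoose_natCast 2 i
  simp only [Finset.sum_range_succ, Finset.sum_range_zero, hchoose, cchoose_zero_right,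
    ← mode_apply] at borcherds
  have hL0 : V.mode 1 V.omega u = (h : ℂ) • u := V.L_zero h u hu
  have hLneg1 : V.mode (2 + n) (V.mode 0 V.omega u) v
      = (-((2 + n : ℤ) : ℂ)) • V.mode (n + 1) u v := by
    rw [show n + 1 = 2 + n - 1 by ring]
    exact V.L_neg_one u (2 + n) v
  simp only [Nat.choose_zero_right, Nat.choose_succ_self_right, Nat.choose_self, Nat.cast_zero,
    Nat.cast_one, Nat.cast_ofNat, Nat.reduceAdd, sub_zero, add_zero, zero_add, one_smul, pow_zero,
    mul_one, zpow_zero, add_sub_cancel_left, hL0, hLneg1, map_smul, LinearMap.smul_apply,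
    show 2 + n - 1 = n + 1 by ring] at borcherds
  simp only [L1, Module.End.mul_apply, LinearMap.add_apply, LinearMap.smul_apply]
  rw [← sub_eq_iff_eq_add, ← borcherds]
  module

/-- The sum of `C(c - l - q, i) (L(1)^q u / q!)_{l+i}` over `i + q = r`. For `u` of weight `h` and
`c = 2h - 2` it is the coefficient of `xʳ` in `e^{xL(1)} u_l e^{-xL(1)}`. -/
noncomputable def conjMode (c l : ℤ) (u : V.carrier) (r : ℕ) : Module.End ℂ V.carrier :=
  ∑ p ∈ antidiagonal r, cchoose (c - l - p.2) p.1 • V.mode (l + p.1) (divPow ℂ V.L1 p.2 u)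

theorem conjMode_zero (c l : ℤ) (u : V.carrier) : conjMode c l u 0 = V.mode l u := by
  simp [conjMode, cchoose_zero_right]

theorem L1_mul_conjMode {h : ℤ} {u : V.carrier} (hu : u ∈ V.wtSpace h) (l : ℤ) (r : ℕ) :
    V.L1 * conjMode (2 * h - 2) l u r
      = ((r : ℂ) + 1) • conjMode (2 * h - 2) l u (r + 1) + conjMode (2 * h - 2) l u r * V.L1 := by
  set y : ℕ → ℤ := fun q => 2 * h - 2 - l - q with hy
  set f : ℕ → ℕ → Module.End ℂ V.carrier :=
    fun i q => V.mode (l + i) (divPow ℂ V.L1 q u) with hf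
  have commutator (i q : ℕ) : V.L1 * f i q
      = ((y q : ℂ) - q - i) • f (i + 1) q + ((q : ℂ) + 1) • f i (q + 1) + f i q * V.L1 := by
    have hL1 : V.L1 (divPow ℂ V.L1 q u) = ((q : ℂ) + 1) • divPow ℂ V.L1 (q + 1) u := by
      rw [← Module.End.mul_apply, mul_divPow, LinearMap.smul_apply]
    simp only [hf, L1_mul_mode (divPow_L1_mem_wtSpace hu q), hL1, map_smul, hy]
    push_cast
    ring_nf
  have shift_mode : ∑ p ∈ antidiagonal r,
      (cchoose (y p.2) p.1 * ((y p.2 : ℂ) - p.2 - p.1)) • f (p.1 + 1) p.2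
      = ∑ p ∈ antidiagonal (r + 1), (((y p.2 : ℂ) - p.2 - p.1 + 1)
          * (cchoose (y p.2 + 1) p.1 - cchoose (y p.2) p.1)) • f p.1 p.2 := by
    rw [Finset.Nat.sum_antidiagonal_succ]
    simp [cchoose_zero_right, cchoose_succ_succ, mul_comm, ← sub_sub]
  have shift_divPow : ∑ p ∈ antidiagonal r,
      (cchoose (y p.2) p.1 * ((p.2 : ℂ) + 1)) • f p.1 (p.2 + 1)
      = ∑ p ∈ antidiagonal (r + 1), ((p.2 : ℂ) * cchoose (y p.2 + 1) p.1) • f p.1 p.2 := by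
    rw [Finset.Nat.sum_antidiagonal_succ']
    simp [hy, mul_comm, ← sub_sub]
  change V.L1 * ∑ p ∈ antidiagonal r, cchoose (y p.2) p.1 • f p.1 p.2
    = ((r : ℂ) + 1) • ∑ p ∈ antidiagonal (r + 1), cchoose (y p.2) p.1 • f p.1 p.2
      + (∑ p ∈ antidiagonal r, cchoose (y p.2) p.1 • f p.1 p.2) * V.L1
  simp only [Finset.mul_sum, mul_smul_comm, commutator, smul_add, smul_smul,
    Finset.sum_add_distrib, shift_mode, shift_divPow, Finset.sum_mul, smul_mul_assoc]
  rw [← Finset.sum_add_distrib, Finset.smul_sum]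
  congr 1
  refine Finset.sum_congr rfl fun p hp => ?_
  rw [← add_smul, ← add_mul_cchoose, smul_smul, ← Nat.cast_add, mem_antidiagonal.mp hp,
    Nat.cast_succ]

theorem divPow_L1_mul_mode {h : ℤ} {u : V.carrier} (hu : u ∈ V.wtSpace h) (l : ℤ) (s : ℕ) :
    divPow ℂ V.L1 s * V.mode l u
      = ∑ p ∈ antidiagonal s, conjMode (2 * h - 2) l u p.1 * divPow ℂ V.L1 p.2 := by
  rw [← conjMode_zero (2 * h - 2) l u]
  exact divPow_mul_eq_sum_antidiagonal (L1_mul_conjMode hu l) s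

theorem sum_antidiagonal_smul_conjMode (c d l : ℤ) (u : V.carrier) (s : ℕ) :
    ∑ p ∈ antidiagonal s, ((-1) ^ p.1 * cchoose (d - c) p.1) • conjMode d (l + p.1) u p.2
      = conjMode c l u s := by
  simp only [conjMode, Finset.smul_sum, smul_smul]
  rw [← sum_antidiagonal_antidiagonal fun i j q =>
    ((-1) ^ i * cchoose (d - c) i * cchoose (d - (l + i) - q) j) •
      V.mode (l + i + j) (divPow ℂ V.L1 q u)]
  refine Finset.sum_congr rfl fun ⟨x, q⟩ _ => ?_
  rw [show c - l - q = d - l - q - (d - c) by ring,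
    ← sum_antidiagonal_cchoose_mul_cchoose_sub, Finset.sum_smul]
  refine Finset.sum_congr rfl fun ⟨i, j⟩ hp => ?_
  obtain rfl := mem_antidiagonal.mp hp
  push_cast
  ring_nf

theorem sum_antidiagonal_smul_divPow_L1_mul_mode {h : ℤ} {u : V.carrier} (hu : u ∈ V.wtSpace h)
    (c l : ℤ) (s : ℕ) :
    ∑ p ∈ antidiagonal s, ((-1) ^ p.1 * cchoose (2 * h - 2 - c) p.1) •
        (divPow ℂ V.L1 p.2 * V.mode (l + p.1) u)
      = ∑ p ∈ antidiagonal s, conjMode c l u p.1 * divPow ℂ V.L1 p.2 := by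
  simp only [divPow_L1_mul_mode hu, Finset.smul_sum, ← smul_mul_assoc,
    ← sum_antidiagonal_smul_conjMode c (2 * h - 2) l u, Finset.sum_mul]
  exact (sum_antidiagonal_antidiagonal (fun i r p =>
    (((-1) ^ i * cchoose (2 * h - 2 - c) i) • conjMode (2 * h - 2) (l + i) u r) *
      divPow ℂ V.L1 p) s).symm

end VOA

namespace WeakModule

variable {V : VOA} (W : WeakModule V)

/-- The mode `v ↦ vₙ` of the vertex operator map, with values in the endomorphisms of `W`. -/
noncomputable def mode (n : ℤ) : V.carrier →ₗ[ℂ] Module.End ℂ W.carrier :=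
  LinearMap.mk₂ ℂ (fun v w => W.op v n w)
    (fun v v' w => (W.op_linear_left n w).map_add v v')
    (fun c v w => (W.op_linear_left n w).map_smul c v)
    (fun v w w' => (W.op_linear_right v n).map_add w w')
    (fun c v w => (W.op_linear_right v n).map_smul c w)

theorem mode_apply (n : ℤ) (v : V.carrier) (w : W.carrier) : W.mode n v w = W.op v n w := rfl

theorem eventually_mode_eq_zero (v : V.carrier) (w : W.carrier) (n : ℤ) :
    ∀ᶠ i : ℕ in Filter.atTop, W.mode (n + i) v w = 0 := by
  obtain ⟨N, hN⟩ := W.trunc v w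
  filter_upwards [Filter.eventually_ge_atTop (N - n).toNat] with i hi
  exact hN _ (by lia)

theorem eventually_borcherds (u v : V.carrier) (w : W.carrier) (l m n : ℤ) :
    ∀ᶠ N in Filter.atTop,
      ∑ i ∈ Finset.range N, cchoose m i • W.mode (m + n - i) (V.mode (l + i) u v) w
        = ∑ i ∈ Finset.range N, ((-1) ^ i * cchoose l i) •
          (W.mode (l + m - i) u (W.mode (n + i) v w)
            - (-1 : ℂ) ^ l • W.mode (l + n - i) v (W.mode (m + i) u w)) := by
  refine (finsum_eq_finsum_iff_eventually ?_ ?_).mp (W.borcherds u v w l m n)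
  · filter_upwards [VOA.eventually_mode_eq_zero u v l] with i hi
    rw [hi, map_zero, LinearMap.zero_apply, smul_zero]
  · filter_upwards [W.eventually_mode_eq_zero v w n, W.eventually_mode_eq_zero u w m] with i hv hu
    rw [hv, hu, map_zero, map_zero, smul_zero, sub_zero, smul_zero]

/-- The coefficient of `x^{a+1}` in `Y(e^{xL(1)}v, x⁻¹)`. -/
noncomputable def expMode (a : ℤ) : V.carrier →ₗ[ℂ] Module.End ℂ W.carrier :=
  locallyFiniteSum (fun i : ℕ => W.mode (a - i) ∘ₗ divPow ℂ V.L1 i) fun v => by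
    refine finite_support_of_eventually_eq_zero ?_
    filter_upwards [VOA.eventually_divPow_L1_eq_zero v] with i hi
    rw [LinearMap.comp_apply, hi, map_zero]

theorem expMode_eq_sum_range {v : V.carrier} {N : ℕ} (hN : ∀ i, N ≤ i → divPow ℂ V.L1 i v = 0)
    (a : ℤ) :
    W.expMode a v = ∑ i ∈ Finset.range N, W.mode (a - i) (divPow ℂ V.L1 i v) :=
  finsum_eq_sum_range fun i hi => by rw [LinearMap.comp_apply, hN i hi, map_zero]

theorem expMode_apply_expMode_apply {u v : V.carrier} {N : ℕ}
    (hu : ∀ q, N ≤ q → divPow ℂ V.L1 q u = 0) (hv : ∀ p, N ≤ p → divPow ℂ V.L1 p v = 0)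
    (a b : ℤ) (w : W.carrier) :
    W.expMode a u (W.expMode b v w) = ∑ q ∈ Finset.range N, ∑ p ∈ Finset.range N,
      W.mode (a - q) (divPow ℂ V.L1 q u) (W.mode (b - p) (divPow ℂ V.L1 p v) w) := by
  simp only [W.expMode_eq_sum_range hu, W.expMode_eq_sum_range hv, LinearMap.sum_apply, map_sum]
  exact Finset.sum_comm

theorem sum_antidiagonal_smul_mode_divPow_L1_mode {h : ℤ} {u : V.carrier} (hu : u ∈ V.wtSpace h)
    (v : V.carrier) (a l t : ℤ) (s : ℕ) :
    ∑ p ∈ antidiagonal s, ((-1) ^ p.1 * cchoose (2 * h - 2 - a) p.1) •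
        W.mode (t - p.1 - p.2) (divPow ℂ V.L1 p.2 (V.mode (l + p.1) u v))
      = ∑ x ∈ antidiagonal s, ∑ p ∈ antidiagonal x.1, cchoose (a - l - p.2) p.1 •
          W.mode (t - p.2 - x.2 - p.1)
            (V.mode (l + p.1) (divPow ℂ V.L1 p.2 u) (divPow ℂ V.L1 x.2 v)) := by
  have key := congr(W.mode (t - s) ($(VOA.sum_antidiagonal_smul_divPow_L1_mul_mode hu a l s) v))
  simp only [VOA.conjMode, LinearMap.sum_apply, LinearMap.smul_apply, Module.End.mul_apply,
    map_sum, map_smul] at key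
  convert key using 2 with x hx x hx
  · rw [← mem_antidiagonal.mp hx, Nat.cast_add, ← sub_sub]
  · refine Finset.sum_congr rfl fun p hp => ?_
    rw [← mem_antidiagonal.mp hx, ← mem_antidiagonal.mp hp]
    push_cast
    ring_nf

theorem sum_smul_expMode_mode {h k l : ℤ} {u v : V.carrier} (hu : u ∈ V.wtSpace h)
    (hv : v ∈ V.wtSpace k) {N : ℕ} (hN : ∀ n ≤ h + k - l - 1 - N, ∀ x ∈ V.wtSpace n, x = 0)
    (a t : ℤ) :
    ∑ i ∈ Finset.range N, ((-1) ^ i * cchoose (2 * h - 2 - a) i) •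
        W.expMode (t - i) (V.mode (l + i) u v)
      = ∑ i ∈ Finset.range N, ∑ q ∈ Finset.range N, ∑ p ∈ Finset.range N, cchoose (a - l - q) i •
          W.mode (t - q - p - i) (V.mode (l + i) (divPow ℂ V.L1 q u) (divPow ℂ V.L1 p v)) := by
  set f : ℕ → ℕ → Module.End ℂ W.carrier := fun i j =>
    ((-1) ^ i * cchoose (2 * h - 2 - a) i) •
      W.mode (t - i - j) (divPow ℂ V.L1 j (V.mode (l + i) u v)) with hf
  set g : ℕ → ℕ → ℕ → Module.End ℂ W.carrier := fun i q p => cchoose (a - l - q) i •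
    W.mode (t - q - p - i) (V.mode (l + i) (divPow ℂ V.L1 q u) (divPow ℂ V.L1 p v)) with hg
  have divPow_mode_eq_zero (i j : ℕ) (hij : N ≤ i + j) :
      divPow ℂ V.L1 j (V.mode (l + i) u v) = 0 :=
    hN _ (by lia) _ (VOA.divPow_L1_mem_wtSpace (VOA.mode_mem_wtSpace hu hv _) j)
  have g_eq_zero (i q p : ℕ) (hiqp : N ≤ i + q + p) : g i q p = 0 := by
    have hmem := VOA.mode_mem_wtSpace (VOA.divPow_L1_mem_wtSpace hu q)
      (VOA.divPow_L1_mem_wtSpace hv p) (l + i)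
    simp only [hg, hN _ (by lia) _ hmem, map_zero, smul_zero]
  calc ∑ i ∈ Finset.range N, ((-1) ^ i * cchoose (2 * h - 2 - a) i) •
        W.expMode (t - i) (V.mode (l + i) u v)
      = ∑ i ∈ Finset.range N, ∑ j ∈ Finset.range N, f i j := by
        refine Finset.sum_congr rfl fun i _ => ?_
        rw [W.expMode_eq_sum_range (N := N) fun j hj => divPow_mode_eq_zero i j (by lia),
          Finset.smul_sum]
    _ = ∑ s ∈ Finset.range N, ∑ x ∈ antidiagonal s, ∑ p ∈ antidiagonal x.1, g p.1 p.2 x.2 := by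
        rw [← sum_range_sum_antidiagonal f fun i j hij => by
          simp only [hf, divPow_mode_eq_zero i j hij, map_zero, smul_zero]]
        exact Finset.sum_congr rfl fun s _ =>
          W.sum_antidiagonal_smul_mode_divPow_L1_mode hu v a l t s
    _ = ∑ i ∈ Finset.range N, ∑ q ∈ Finset.range N, ∑ p ∈ Finset.range N, g i q p :=
        sum_range_sum_antidiagonal_antidiagonal g g_eq_zero

theorem eventually_borcherds_divPow_L1 (u v : V.carrier) (w : W.carrier) (a b l : ℤ) :
    ∀ᶠ N in Filter.atTop, ∀ q p : ℕ,
      ∑ i ∈ Finset.range N, cchoose (a - l - q) i • W.mode (a + b - 2 * l - q - p - i)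
          (V.mode (l + i) (divPow ℂ V.L1 q u) (divPow ℂ V.L1 p v)) w
        = ∑ i ∈ Finset.range N, ((-1) ^ i * cchoose l i) •
          (W.mode (a - i - q) (divPow ℂ V.L1 q u)
              (W.mode (b - l + i - p) (divPow ℂ V.L1 p v) w)
            - (-1 : ℂ) ^ l • W.mode (b - i - p) (divPow ℂ V.L1 p v)
              (W.mode (a - l + i - q) (divPow ℂ V.L1 q u) w)) := by
  obtain ⟨K, hK⟩ := Filter.eventually_atTop.mp
    ((VOA.eventually_divPow_L1_eq_zero u).and (VOA.eventually_divPow_L1_eq_zero v))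
  have borcherds := (Finset.range K).eventually_all.mpr fun q _ =>
    (Finset.range K).eventually_all.mpr fun p _ =>
      W.eventually_borcherds (divPow ℂ V.L1 q u) (divPow ℂ V.L1 p v) w l (a - l - q) (b - l - p)
  filter_upwards [borcherds] with N hN q p
  rcases le_or_gt K q with hq | hq
  · simp [(hK q hq).1]
  rcases le_or_gt K p with hp | hp
  · simp [(hK p hp).2]
  convert hN q (Finset.mem_range.mpr hq) p (Finset.mem_range.mpr hp) using 5 with i _ i _ <;>
    ring_nf

theorem eventually_borcherds_expMode {h k : ℤ} {u v : V.carrier} (hu : u ∈ V.wtSpace h)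
    (hv : v ∈ V.wtSpace k) (w : W.carrier) (a b l : ℤ) :
    ∀ᶠ N in Filter.atTop,
      ∑ i ∈ Finset.range N, ((-1) ^ i * cchoose (2 * h - 2 - a) i) •
          W.expMode (a + b - 2 * l - i) (V.mode (l + i) u v) w
        = ∑ i ∈ Finset.range N, ((-1) ^ i * cchoose l i) •
          (W.expMode (a - i) u (W.expMode (b - l + i) v w)
            - (-1 : ℂ) ^ l • W.expMode (b - i) v (W.expMode (a - l + i) u w)) := by
  obtain ⟨M, hM⟩ := V.exists_forall_mem_wtSpace_eq_zero
  filter_upwards [W.eventually_borcherds_divPow_L1 u v w a b l,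
    Filter.eventually_forall_ge_atTop.mpr (VOA.eventually_divPow_L1_eq_zero u),
    Filter.eventually_forall_ge_atTop.mpr (VOA.eventually_divPow_L1_eq_zero v),
    Filter.eventually_gt_atTop (h + k - l - 1 - M).toNat] with N borcherds hNu hNv hN
  have wtSpace_eq_zero : ∀ n ≤ h + k - l - 1 - N, ∀ x ∈ V.wtSpace n, x = 0 :=
    fun n hn => hM n (by lia)
  have expand := congr($(W.sum_smul_expMode_mode hu hv wtSpace_eq_zero a (a + b - 2 * l)) w)
  simp only [LinearMap.sum_apply, LinearMap.smul_apply] at expand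
  rw [expand, sum_range_rotate]
  simp only [borcherds, W.expMode_apply_expMode_apply hNu hNv,
    W.expMode_apply_expMode_apply hNv hNu]
  rw [← sum_range_rotate]
  refine Finset.sum_congr rfl fun i _ => ?_
  simp only [← Finset.smul_sum, Finset.sum_sub_distrib]
  congr 3
  exact Finset.sum_comm

/-- The transpose of the mode `v*ₙ` on `W*`: for `v` of weight `h` it is `(-1)^h` times the
coefficient of `x^{-n-1}` in `x^{-2h} Y(e^{xL(1)}v, x⁻¹)`. -/
noncomputable def adjointMode (n : ℤ) : V.carrier →ₗ[ℂ] Module.End ℂ W.carrier :=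
  locallyFiniteSum (fun h : ℤ => ((-1 : ℂ) ^ h • W.expMode (2 * h - n - 2)) ∘ₗ V.projₗ h)
    fun v => (V.proj_finite v).subset fun h hh h0 => hh (by simp [V.projₗ_apply, h0])

theorem adjointMode_of_mem {h : ℤ} {v : V.carrier} (hv : v ∈ V.wtSpace h) (n : ℤ) :
    W.adjointMode n v = (-1 : ℂ) ^ h • W.expMode (2 * h - n - 2) v := by
  rw [adjointMode, locallyFiniteSum_apply, finsum_eq_single _ h fun g hg => ?_]
  · simp [V.projₗ_apply, V.proj_eq h v hv]
  · simp [V.projₗ_apply, V.proj_ne h g hg.symm v hv]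

theorem dmode_eq (v : V.carrier) (n : ℤ) (α : Module.Dual ℂ W.carrier) (w : W.carrier) :
    W.dmode v n α w = α (W.adjointMode n v w) := by
  rw [adjointMode, ← LinearMap.applyₗ_apply_apply (R := ℂ) w, ← LinearMap.comp_apply,
    map_locallyFiniteSum]
  refine finsum_congr fun h => ?_
  simp only [LinearMap.comp_apply, LinearMap.smul_apply, map_smul]
  rw [← LinearMap.comp_apply α, expMode, map_locallyFiniteSum, smul_finsum]
  refine finsum_congr fun i => ?_
  simp only [LinearMap.comp_apply, divPow, LinearMap.smul_apply, map_smul, Module.End.pow_apply,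
    LinearMap.applyₗ_apply_apply, smul_eq_mul, V.projₗ_apply, W.mode_apply]
  rw [div_eq_mul_inv, mul_assoc, show 2 * h - n - i - 2 = 2 * h - n - 2 - i by ring]
  rfl

theorem eventually_borcherds_adjointMode_of_mem {h k : ℤ} {u v : V.carrier}
    (hu : u ∈ V.wtSpace h) (hv : v ∈ V.wtSpace k) (w : W.carrier) (l m n : ℤ) :
    ∀ᶠ N in Filter.atTop,
      ∑ i ∈ Finset.range N, cchoose m i • W.adjointMode (m + n - i) (V.mode (l + i) u v) w
        = ∑ i ∈ Finset.range N, ((-1) ^ i * cchoose l i) •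
          (W.adjointMode (n + i) v (W.adjointMode (l + m - i) u w)
            - (-1 : ℂ) ^ l • W.adjointMode (m + i) u (W.adjointMode (l + n - i) v w)) := by
  have sign (i : ℕ) : (-1 : ℂ) ^ (h + k - (l + i) - 1) = -(-1) ^ (h + k + l) * (-1) ^ i := by
    rw [show h + k - (l + i) - 1 = h + k + l + i + 1 + 2 * (-(l + i) - 1) by ring]
    simp [zpow_add₀, zpow_mul]
  have sign_sq : ((-1 : ℂ) ^ l) ^ 2 = 1 := by
    rw [pow_two, ← mul_zpow, neg_mul_neg, one_mul, one_zpow]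
  filter_upwards [W.eventually_borcherds_expMode hu hv w (2 * h - m - 2) (2 * k - n - 2) l]
    with N hN
  have key := congr(-(-1 : ℂ) ^ (h + k + l) • $hN)
  simp only [Finset.smul_sum] at key
  convert key using 2 with i _ i _
  · rw [W.adjointMode_of_mem (VOA.mode_mem_wtSpace hu hv _), sign]
    simp only [LinearMap.smul_apply, smul_smul]
    ring_nf
  · simp only [W.adjointMode_of_mem hu, W.adjointMode_of_mem hv, LinearMap.smul_apply, map_smul,
      zpow_add₀ (neg_ne_zero.mpr (one_ne_zero (α := ℂ))), smul_sub, smul_smul]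
    ring_nf
    rw [sign_sq]
    module

theorem eventually_borcherds_adjointMode (u v : V.carrier) (w : W.carrier) (l m n : ℤ) :
    ∀ᶠ N in Filter.atTop,
      ∑ i ∈ Finset.range N, cchoose m i • W.adjointMode (m + n - i) (V.mode (l + i) u v) w
        = ∑ i ∈ Finset.range N, ((-1) ^ i * cchoose l i) •
          (W.adjointMode (n + i) v (W.adjointMode (l + m - i) u w)
            - (-1 : ℂ) ^ l • W.adjointMode (m + i) u (W.adjointMode (l + n - i) v w)) := by
  induction u using VOA.induction_homogeneous with
  | zero => simp
  | add u u' hu hu' =>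
    filter_upwards [hu, hu'] with N hu hu'
    convert congr($hu + $hu') using 1 <;> rw [← Finset.sum_add_distrib] <;>
    refine Finset.sum_congr rfl fun i _ => ?_ <;>
    simp only [map_add, LinearMap.add_apply] <;>
    module
  | homogeneous h u hu =>
    induction v using VOA.induction_homogeneous with
    | zero => simp
    | add v v' hv hv' =>
      filter_upwards [hv, hv'] with N hv hv'
      convert congr($hv + $hv') using 1 <;> rw [← Finset.sum_add_distrib] <;>
      refine Finset.sum_congr rfl fun i _ => ?_ <;>
      simp only [map_add, LinearMap.add_apply] <;>
      module
    | homogeneous k v hv => exact W.eventually_borcherds_adjointMode_of_mem hu hv w l m n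

theorem eventually_adjointMode_comp_adjointMode (u v : V.carrier) (w : W.carrier) (m n : ℤ) :
    ∀ᶠ N in Filter.atTop,
      W.adjointMode n v (W.adjointMode m u w) = W.adjointMode m u (W.adjointMode n v w)
        + ∑ i ∈ Finset.range N, cchoose m i • W.adjointMode (m + n - i) (V.mode i u v) w := by
  filter_upwards [W.eventually_borcherds_adjointMode u v w 0 m n, Filter.eventually_ge_atTop 1]
    with N hN hN1
  obtain ⟨N, rfl⟩ := Nat.exists_eq_add_of_le' hN1
  rw [Finset.sum_range_succ' fun i : ℕ => ((-1 : ℂ) ^ i * cchoose 0 i) • _] at hN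
  simp only [cchoose_zero_succ, cchoose_zero_right, mul_zero, zero_smul, Finset.sum_const_zero,
    zero_add, pow_zero, one_smul, mul_one, zpow_zero, Nat.cast_zero, add_zero, sub_zero] at hN
  rw [hN, add_sub_cancel]

theorem adjointMode_of_L1_eq_zero {h : ℤ} {v : V.carrier} (hv : v ∈ V.wtSpace h)
    (hL1 : V.L1 v = 0) (n : ℤ) :
    W.adjointMode n v = (-1 : ℂ) ^ h • W.mode (2 * h - n - 2) v := by
  rw [W.adjointMode_of_mem hv, W.expMode_eq_sum_range (N := 1)]
  · simp
  · intro i hi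
    obtain ⟨i, rfl⟩ := Nat.exists_eq_add_of_le' hi
    rw [divPow, LinearMap.smul_apply, pow_succ, Module.End.mul_apply, hL1, map_zero, smul_zero]

theorem adjointMode_one (n : ℤ) : W.adjointMode n V.one = if n = -1 then 1 else 0 := by
  have hL1 : V.L1 V.one = 0 := V.create_nonneg _ _ zero_le_two
  ext w
  rw [W.adjointMode_of_L1_eq_zero V.one_wt hL1, zpow_zero, one_smul, W.mode_apply, W.one_op]
  split_ifs <;> first | rfl | lia

theorem adjointMode_omega : W.adjointMode 1 V.omega = W.L0 := by
  have hL1 : V.L1 V.omega = 0 := by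
    have virasoro := V.virasoro 1 (-2) V.one
    norm_num [V.create, V.create_nonneg, (V.op_linear_right _ _).map_zero] at virasoro
    exact virasoro
  rw [W.adjointMode_of_L1_eq_zero V.omega_wt hL1]
  norm_num
  rfl

/-- `D(W)` as a submodule of the algebraic dual of `W`. -/
noncomputable def DWSubmodule : Submodule ℂ (Module.Dual ℂ W.carrier) where
  carrier := {α | ∀ v, ∀ᶠ n : ℤ in Filter.atTop, α ∘ₗ W.adjointMode n v = 0}
  zero_mem' v := by simp
  add_mem' hα hβ v := by
    filter_upwards [hα v, hβ v] with n hα hβ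
    rw [LinearMap.add_comp, hα, hβ, add_zero]
  smul_mem' c α hα v := by
    filter_upwards [hα v] with n hα
    rw [LinearMap.smul_comp, hα, smul_zero]

variable {W}

theorem mem_DWSubmodule {α : Module.Dual ℂ W.carrier} : α ∈ W.DWSubmodule ↔
    ∀ v, ∀ᶠ n : ℤ in Filter.atTop, α ∘ₗ W.adjointMode n v = 0 := Iff.rfl

theorem coe_mem_DW {α : Module.Dual ℂ W.carrier} : ⇑α ∈ W.DW ↔ α ∈ W.DWSubmodule := by
  simp [DW, mem_DWSubmodule, α.isLinear, dmode_eq, Filter.eventually_atTop, LinearMap.ext_iff]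

theorem comp_adjointMode_mem_DWSubmodule {α : Module.Dual ℂ W.carrier} (hα : α ∈ W.DWSubmodule)
    (v : V.carrier) (n : ℤ) : α ∘ₗ W.adjointMode n v ∈ W.DWSubmodule := by
  intro u
  obtain ⟨K, hK⟩ := Filter.eventually_atTop.mp (VOA.eventually_mode_eq_zero u v 0)
  have vanish : ∀ᶠ m : ℤ in Filter.atTop, ∀ i ∈ Finset.range K,
      α ∘ₗ W.adjointMode (m + n - i) (V.mode i u v) = 0 :=
    (Finset.range K).eventually_all.mpr fun i _ =>
      (Filter.tendsto_atTop_add_const_right _ (n - i : ℤ) Filter.tendsto_id).eventually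
        (hα (V.mode i u v)) |>.mono fun m hm => by rwa [id, ← add_sub_assoc] at hm
  filter_upwards [hα u, vanish] with m hm hvanish
  ext w
  obtain ⟨N, commutator⟩ := (W.eventually_adjointMode_comp_adjointMode u v w m n).exists
  rw [LinearMap.comp_apply, LinearMap.comp_apply, commutator, map_add, map_sum,
    ← LinearMap.comp_apply, hm, LinearMap.zero_apply, zero_add]
  refine Finset.sum_eq_zero fun i _ => ?_
  rw [map_smul]
  rcases lt_or_ge i K with hi | hi
  · rw [← LinearMap.comp_apply, hvanish i (Finset.mem_range.mpr hi), LinearMap.zero_apply,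
      smul_zero]
  · have := hK i hi
    rw [zero_add] at this
    simp [this]

/-- The mode `v*ₙ` of `Y*` on `D(W)`. -/
noncomputable def dualMode (v : V.carrier) (n : ℤ) : Module.End ℂ W.DWSubmodule :=
  (W.adjointMode n v).dualMap.restrict fun _ hα => comp_adjointMode_mem_DWSubmodule hα v n

theorem dualMode_apply_apply (v : V.carrier) (n : ℤ) (α : W.DWSubmodule) (w : W.carrier) :
    (dualMode v n α).1 w = α.1 (W.adjointMode n v w) := rfl

theorem eventually_dualMode_eq_zero (v : V.carrier) (α : W.DWSubmodule) :
    ∀ᶠ n in Filter.atTop, dualMode v n α = 0 := by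
  filter_upwards [α.2 v] with n hn
  exact Subtype.ext hn

theorem dualMode_borcherds (u v : V.carrier) (α : W.DWSubmodule) (l m n : ℤ) :
    ∑ᶠ i : ℕ, cchoose m i • dualMode (V.mode (l + i) u v) (m + n - i) α
      = ∑ᶠ i : ℕ, ((-1) ^ i * cchoose l i) •
        (dualMode u (l + m - i) (dualMode v (n + i) α)
          - (-1 : ℂ) ^ l • dualMode v (l + n - i) (dualMode u (m + i) α)) := by
  have dualMode_shift (v : V.carrier) (n : ℤ) :
      ∀ᶠ i : ℕ in Filter.atTop, dualMode v (n + i) α = 0 :=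
    (Filter.tendsto_atTop_add_const_left _ n tendsto_natCast_atTop_atTop).eventually
      (eventually_dualMode_eq_zero v α)
  have hleft : ∀ᶠ i : ℕ in Filter.atTop,
      cchoose m i • dualMode (V.mode (l + i) u v) (m + n - i) α = 0 := by
    filter_upwards [VOA.eventually_mode_eq_zero u v l] with i hi
    ext w
    simp [dualMode_apply_apply, hi]
  have hright : ∀ᶠ i : ℕ in Filter.atTop, ((-1) ^ i * cchoose l i) •
      (dualMode u (l + m - i) (dualMode v (n + i) α)
        - (-1 : ℂ) ^ l • dualMode v (l + n - i) (dualMode u (m + i) α)) = 0 := by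
    filter_upwards [dualMode_shift v n, dualMode_shift u m] with i hv hu
    simp [hv, hu]
  ext w
  let eval : W.DWSubmodule →ₗ[ℂ] ℂ := LinearMap.applyₗ w ∘ₗ W.DWSubmodule.subtype
  change eval _ = eval _
  rw [map_finsum eval (finite_support_of_eventually_eq_zero hleft),
    map_finsum eval (finite_support_of_eventually_eq_zero hright),
    finsum_eq_finsum_iff_eventually (hleft.mono fun i hi => by rw [hi, map_zero])
      (hright.mono fun i hi => by rw [hi, map_zero])]
  filter_upwards [W.eventually_borcherds_adjointMode u v w l m n] with N hN
  simpa [eval, dualMode_apply_apply] using congr(α.1 $hN)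

variable (W) in
/-- The weak module `D(W)`, with vertex operator map `Y*`. -/
noncomputable def dualModule : WeakModule V where
  carrier := W.DWSubmodule
  op v n α := dualMode v n α
  op_linear_left n α :=
    ⟨fun u v => by ext w; simp [dualMode_apply_apply],
      fun c u => by ext w; simp [dualMode_apply_apply]⟩
  op_linear_right v n := (dualMode v n).isLinear
  trunc v α := Filter.eventually_atTop.mp (eventually_dualMode_eq_zero v α)
  one_op n α := by
    ext w
    rw [dualMode_apply_apply, adjointMode_one]
    split_ifs <;> simp
  borcherds := dualMode_borcherds

end WeakModule

namespace GenModule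

variable {V : VOA} (W : GenModule V)

/-- The restricted dual `W'` as a submodule of the algebraic dual of `W`. -/
def restrictedDualSubmodule : Submodule ℂ (Module.Dual ℂ W.carrier) where
  carrier := {α | ∀ᶠ h in Filter.cofinite, ∀ w ∈ W.wt h, α w = 0}
  zero_mem' := by simp
  add_mem' hα hβ := by
    rw [Set.mem_ofPred_eq] at hα hβ ⊢
    filter_upwards [hα, hβ] with h hα hβ w hw
    rw [LinearMap.add_apply, hα w hw, hβ w hw, add_zero]
  smul_mem' c α hα := by
    rw [Set.mem_ofPred_eq] at hα ⊢
    filter_upwards [hα] with h hα w hw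
    rw [LinearMap.smul_apply, hα w hw, smul_zero]

variable {W}

theorem mem_restrictedDualSubmodule {α : Module.Dual ℂ W.carrier} :
    α ∈ W.restrictedDualSubmodule ↔ ∀ᶠ h in Filter.cofinite, ∀ w ∈ W.wt h, α w = 0 := Iff.rfl

theorem coe_mem_restrictedDual {α : Module.Dual ℂ W.carrier} :
    ⇑α ∈ W.restrictedDual ↔ α ∈ W.restrictedDualSubmodule := by
  simp [restrictedDual, mem_restrictedDualSubmodule, α.isLinear, Filter.eventually_cofinite]

theorem linearMap_ext_wt {M : Type*} [AddCommMonoid M] [Module ℂ M] {φ ψ : W.carrier →ₗ[ℂ] M}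
    (hφψ : ∀ h, ∀ w ∈ W.wt h, φ w = ψ w) : φ = ψ := by
  ext w
  rw [← W.projW_sum w]
  exact finsum_induction (fun w => φ w = ψ w) (by simp)
    (fun x y hx hy => by rw [map_add, map_add, hx, hy]) fun h => hφψ h _ (W.projW_mem h w)

theorem adjointMode_mem_wt {k : ℤ} {v : V.carrier} (hv : v ∈ V.wtSpace k) {g : ℂ} {w : W.carrier}
    (hw : w ∈ W.wt g) (n : ℤ) : W.adjointMode n v w ∈ W.wt (g - k + n + 1) := by
  obtain ⟨K, hK⟩ := Filter.eventually_atTop.mp (VOA.eventually_divPow_L1_eq_zero v)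
  rw [W.adjointMode_of_mem hv, W.expMode_eq_sum_range hK, LinearMap.smul_apply,
    LinearMap.sum_apply]
  refine Submodule.smul_mem _ _ (Submodule.sum_mem _ fun i _ => ?_)
  convert W.wt_op _ _ (VOA.divPow_L1_mem_wtSpace hv i) g (2 * k - n - 2 - i) w hw using 2
  · push_cast
    ring
  · rw [W.mode_apply]

theorem apply_eq_zero_of_mem_eig_dualModule {α : W.DWSubmodule} {h : ℂ}
    (hα : α ∈ W.dualModule.eig h) {g : ℂ} (hg : g ≠ h) {w : W.carrier} (hw : w ∈ W.wt g) :
    α.1 w = 0 := by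
  have eigen : WeakModule.dualMode V.omega 1 α = h • α := sub_eq_zero.mp hα
  have hL0 : W.L0 w = g • w := W.wt_L0 g w hw
  have eval := congr($eigen.1 w)
  rw [WeakModule.dualMode_apply_apply, W.adjointMode_omega, hL0, map_smul] at eval
  exact (mul_eq_mul_right_iff.mp eval).resolve_left hg

theorem DWSubmodule_le_restrictedDualSubmodule (hD : ⨆ h : ℂ, W.dualModule.eig h = ⊤) :
    W.DWSubmodule ≤ W.restrictedDualSubmodule := by
  have eig_le (h : ℂ) :
      W.dualModule.eig h ≤ W.restrictedDualSubmodule.comap W.DWSubmodule.subtype := by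
    intro α hα
    refine (Set.finite_singleton h).subset fun g hg => ?_
    by_contra hne
    exact hg fun w hw => apply_eq_zero_of_mem_eig_dualModule hα hne hw
  have top_le := iSup_le eig_le
  rw [hD] at top_le
  exact fun α hα => top_le (Submodule.mem_top (x := ⟨α, hα⟩))

theorem eventually_wt_sub_eq_bot (h : ℂ)
    (hW : ∃ N : ℤ, ∀ m : ℤ, m ≤ N → W.wt (h + m) = ⊥) :
    ∀ᶠ n : ℤ in Filter.atTop, W.wt (h - n) = ⊥ := by
  obtain ⟨N, hN⟩ := hW
  filter_upwards [Filter.eventually_ge_atTop (-N)] with n hn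
  simpa [sub_eq_add_neg] using hN (-n) (by lia)

theorem restrictedDualSubmodule_le_DWSubmodule
    (hW : ∀ h : ℂ, ∃ N : ℤ, ∀ m : ℤ, m ≤ N → W.wt (h + m) = ⊥) :
    W.restrictedDualSubmodule ≤ W.DWSubmodule := by
  intro α hα v
  induction v using VOA.induction_homogeneous with
  | zero => simp
  | add u v hu hv =>
    filter_upwards [hu, hv] with n hu hv
    rw [map_add, LinearMap.comp_add, hu, hv, add_zero]
  | homogeneous k v hv =>
    have support_finite : {h | ¬ ∀ w ∈ W.wt h, α w = 0}.Finite := hα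
    have lower : ∀ᶠ n : ℤ in Filter.atTop, ∀ h ∈ {h | ¬ ∀ w ∈ W.wt h, α w = 0},
        W.wt (h + k - 1 - n) = ⊥ :=
      (Filter.eventually_all_finite support_finite).mpr fun h _ =>
        W.eventually_wt_sub_eq_bot _ (hW _)
    filter_upwards [lower] with n hn
    refine linearMap_ext_wt fun g w hw => ?_
    by_contra hne
    have bot := hn (g - k + n + 1) fun hzero => hne (hzero _ (adjointMode_mem_wt hv hw n))
    rw [show g - k + n + 1 + k - 1 - n = g by ring] at bot
    rw [bot, Submodule.mem_bot] at hw
    exact hne (by rw [hw, map_zero, map_zero])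

end GenModule

theorem DW_eq_restricted_dual_of_classA_general {V : VOA} (W : GenModule V)
    (hD : ⨆ h : ℂ, W.dualModule.eig h = ⊤)
    (hW : ∀ h : ℂ, ∃ N : ℤ, ∀ m : ℤ, m ≤ N → W.wt (h + m) = ⊥) :
    W.DW = W.restrictedDual := by
  have mem_iff (α : Module.Dual ℂ W.carrier) : ⇑α ∈ W.DW ↔ ⇑α ∈ W.restrictedDual := by
    rw [WeakModule.coe_mem_DW, GenModule.coe_mem_restrictedDual]
    exact ⟨fun hα => GenModule.DWSubmodule_le_restrictedDualSubmodule hD hα,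
      fun hα => GenModule.restrictedDualSubmodule_le_DWSubmodule hW hα⟩
  ext α
  exact ⟨fun hα => (mem_iff (hα.1.mk' α)).mp hα, fun hα => (mem_iff (hα.1.mk' α)).mpr hα⟩

/-- If `L(0)` acts semisimply on every weak `V`-module (class 𝒜),
then for any ordinary `V`-module `W` one has `D(W) = W'`. -/
theorem DW_eq_restricted_dual_of_classA (V : VOA) (hV : V.classA) (W : OrdModule V) :
    W.toGenModule.toWeakModule.DW = W.toGenModule.restrictedDual :=
  DW_eq_restricted_dual_of_classA_general W.toGenModule (hV _) W.wt_lower
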